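/- Let p* ∈ I be optimal over the class of threshold stopping times, suppose ψ is differentiable at p*, and suppose g has (finite) one-sided derivatives g'(p*−0) and g'(p*+0) at p*. Then the function v(x) := sup_{p∈I} V(p;x) (which equals h(p*)ψ(x) for x < p* and g(x) for x ≥ p*) has one-sided derivatives at p*, and g'(p*+0) = v'(p*+0) ≤ v'(p*−0) ≤ g'(p*−0). -/

import Mathlib

open Set

/-!
Optimality of `p` forces `h = g / ψ` to be maximal at `p`: compare with the threshold `q`
at the starting point `q` when `q < p`, and at the starting point `p` when `p < q`. Hence
`g ≤ h(p) ψ` near `p`, with equality at `p`, so the slope of `h(p) ψ` at `p` lies above the right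
derivative of `g` and below its left derivative. The value function follows `h(p) ψ` to the left of
`p` and `g` to the right.
-/

open scoped Topology

section OneSidedDerivComparison

variable {f k : ℝ → ℝ} {f' k' a : ℝ}

theorem le_of_hasDerivWithinAt_Ici_of_eventuallyLE (hf : HasDerivWithinAt f f' (Ici a) a)
    (hk : HasDerivWithinAt k k' (Ici a) a) (hfk : f ≤ᶠ[𝓝[≥] a] k) (heq : f a = k a) :
    f' ≤ k' := by
  have hmin : IsLocalMinOn (k - f) (Ici a) a := by
    filter_upwards [hfk] with x hx
    simpa [heq] using hx
  have hcone : (1 : ℝ) ∈ posTangentConeAt (Ici a) a :=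
    mem_posTangentConeAt_of_segment_subset <| by
      rw [segment_eq_Icc (by linarith)]
      exact Icc_subset_Ici_self
  simpa using hmin.hasFDerivWithinAt_nonneg (hk.sub hf).hasFDerivWithinAt hcone

theorem le_of_hasDerivWithinAt_Iic_of_eventuallyLE (hf : HasDerivWithinAt f f' (Iic a) a)
    (hk : HasDerivWithinAt k k' (Iic a) a) (hfk : f ≤ᶠ[𝓝[≤] a] k) (heq : f a = k a) :
    k' ≤ f' := by
  have hmin : IsLocalMinOn (k - f) (Iic a) a := by
    filter_upwards [hfk] with x hx
    simpa [heq] using hx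
  have hcone : (-1 : ℝ) ∈ posTangentConeAt (Iic a) a :=
    mem_posTangentConeAt_of_segment_subset <| by
      rw [segment_symm, segment_eq_Icc (by linarith)]
      exact Icc_subset_Iic_self
  simpa using hmin.hasFDerivWithinAt_nonneg (hk.sub hf).hasFDerivWithinAt hcone

end OneSidedDerivComparison

/-- The expected discounted payoff `V(p; x)` of stopping at the first passage above the threshold
`p`, starting from `x`, for the payoff `g` and the increasing fundamental solution `ψ`. -/
noncomputable def thresholdValue (g ψ : ℝ → ℝ) (p x : ℝ) : ℝ :=
  if x < p then g p / ψ p * ψ x else g x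

/-- The threshold `p ∈ I` is optimal among thresholds in `I`, whatever the starting point in `I`.
The function `thresholdValue g ψ p` is then the value function `v` on `I`. -/
def IsOptimalThreshold (g ψ : ℝ → ℝ) (I : Set ℝ) (p : ℝ) : Prop :=
  p ∈ I ∧ ∀ q ∈ I, ∀ x ∈ I, thresholdValue g ψ q x ≤ thresholdValue g ψ p x

section ThresholdValue

variable {g ψ : ℝ → ℝ} {I : Set ℝ} {p x : ℝ}

theorem thresholdValue_of_lt (hx : x < p) : thresholdValue g ψ p x = g p / ψ p * ψ x :=
  if_pos hx

theorem thresholdValue_of_ge (hx : p ≤ x) : thresholdValue g ψ p x = g x :=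
  if_neg hx.not_gt

theorem thresholdValue_of_le (hp : ψ p ≠ 0) (hx : x ≤ p) :
    thresholdValue g ψ p x = g p / ψ p * ψ x := by
  rcases hx.lt_or_eq with hlt | rfl
  · exact thresholdValue_of_lt hlt
  · rw [thresholdValue_of_ge le_rfl, div_mul_cancel₀ _ hp]

theorem IsOptimalThreshold.isMaxOn_div (hopt : IsOptimalThreshold g ψ I p)
    (hψpos : ∀ x ∈ I, 0 < ψ x) : IsMaxOn (fun x ↦ g x / ψ x) I p := by
  obtain ⟨hp, hopt⟩ := hopt
  intro q hq
  rcases lt_or_ge q p with hqp | hpq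
  · have hle := hopt q hq q hq
    rw [thresholdValue_of_ge le_rfl, thresholdValue_of_lt hqp] at hle
    exact (div_le_iff₀ (hψpos q hq)).2 hle
  · have hle := hopt q hq p hp
    rw [thresholdValue_of_le (hψpos q hq).ne' hpq, thresholdValue_of_ge le_rfl] at hle
    exact (le_div_iff₀ (hψpos p hp)).2 hle

theorem hasDerivWithinAt_thresholdValue_Iic {ψ' : ℝ} (hp : ψ p ≠ 0)
    (hψ' : HasDerivWithinAt ψ ψ' (Iic p) p) :
    HasDerivWithinAt (thresholdValue g ψ p) (g p / ψ p * ψ') (Iic p) p :=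
  (hψ'.const_mul _).congr_of_mem (fun _ hx ↦ thresholdValue_of_le hp hx) self_mem_Iic

theorem hasDerivWithinAt_thresholdValue_Ici {g' : ℝ} (hg' : HasDerivWithinAt g g' (Ici p) p) :
    HasDerivWithinAt (thresholdValue g ψ p) g' (Ici p) p :=
  hg'.congr_of_mem (fun _ hx ↦ thresholdValue_of_ge hx) self_mem_Ici

theorem stmt_3_general {ψ' gm gp : ℝ} (hI : I ∈ 𝓝 p) (hψpos : ∀ x ∈ I, 0 < ψ x)
    (hopt : IsOptimalThreshold g ψ I p) (hψ' : HasDerivAt ψ ψ' p)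
    (hgm : HasDerivWithinAt g gm (Iic p) p) (hgp : HasDerivWithinAt g gp (Ici p) p) :
    HasDerivWithinAt (thresholdValue g ψ p) (g p / ψ p * ψ') (Iic p) p ∧
      HasDerivWithinAt (thresholdValue g ψ p) gp (Ici p) p ∧
      gp ≤ g p / ψ p * ψ' ∧ g p / ψ p * ψ' ≤ gm := by
  have hψp : ψ p ≠ 0 := (hψpos p hopt.1).ne'
  have hle : g ≤ᶠ[𝓝 p] fun x ↦ g p / ψ p * ψ x := by
    filter_upwards [hI] with x hx
    exact (div_le_iff₀ (hψpos x hx)).1 (hopt.isMaxOn_div hψpos hx)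
  have heq : g p = g p / ψ p * ψ p := (div_mul_cancel₀ _ hψp).symm
  have hderiv : HasDerivAt (fun x ↦ g p / ψ p * ψ x) (g p / ψ p * ψ') p := hψ'.const_mul _
  exact ⟨hasDerivWithinAt_thresholdValue_Iic hψp hψ'.hasDerivWithinAt,
    hasDerivWithinAt_thresholdValue_Ici hgp,
    le_of_hasDerivWithinAt_Ici_of_eventuallyLE hgp hderiv.hasDerivWithinAt
      (hle.filter_mono nhdsWithin_le_nhds) heq,
    le_of_hasDerivWithinAt_Iic_of_eventuallyLE hgm hderiv.hasDerivWithinAt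
      (hle.filter_mono nhdsWithin_le_nhds) heq⟩

end ThresholdValue

/-- Corollary 1: generalized smooth-pasting. If the threshold `pstar` is optimal over
threshold stopping times, then the value function `v` has one-sided derivatives at
`pstar` and `g'(pstar+0) = v'(pstar+0) ≤ v'(pstar-0) ≤ g'(pstar-0)`. -/
theorem stmt_3 (I : Set ℝ) (hIopen : IsOpen I) (hIconn : I.OrdConnected)
    (hIne : I.Nonempty)
    (g ψ : ℝ → ℝ) (hψpos : ∀ x ∈ I, 0 < ψ x) (hψmono : StrictMonoOn ψ I)
    (V : ℝ → ℝ → ℝ)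
    (hV : ∀ p ∈ I, ∀ x ∈ I, V p x = if x < p then (g p / ψ p) * ψ x else g x)
    (pstar : ℝ) (hpstar : pstar ∈ I)
    (hopt : ∀ p ∈ I, ∀ x ∈ I, V p x ≤ V pstar x)
    (ψ' : ℝ) (hψ' : HasDerivAt ψ ψ' pstar)
    (gm gp : ℝ)
    (hgm : HasDerivWithinAt g gm (Set.Iic pstar) pstar)
    (hgp : HasDerivWithinAt g gp (Set.Ici pstar) pstar)
    (v : ℝ → ℝ)
    (hv : ∀ x, v x = if x < pstar then (g pstar / ψ pstar) * ψ x else g x) :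
    ∃ vm vp : ℝ,
      HasDerivWithinAt v vm (Set.Iic pstar) pstar ∧
      HasDerivWithinAt v vp (Set.Ici pstar) pstar ∧
      vp = gp ∧ vp ≤ vm ∧ vm ≤ gm := by
  obtain rfl : v = thresholdValue g ψ pstar := funext hv
  have hoptimal : IsOptimalThreshold g ψ I pstar :=
    ⟨hpstar, fun p hp x hx ↦ (hV p hp x hx).symm.trans_le <|
      (hopt p hp x hx).trans_eq (hV pstar hpstar x hx)⟩
  obtain ⟨hvm, hvp, hle, hge⟩ :=
    stmt_3_general (hIopen.mem_nhds hpstar) hψpos hoptimal hψ' hgm hgp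
  exact ⟨_, gp, hvm, hvp, rfl, hle, hge⟩
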